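/- arXiv:1405.4688 — 2 statements merged into one kernel-verified Lean document; each statement's English description precedes it below -/
import Mathlib

section
/- Let 0 < p < 1. The map (A, B, C) ↦ (1-p) ∫₀¹ C^{1/2}(C^{-1/2}(λA + (1-λ)B)C^{-1/2})^{-p} C^{1/2} dλ is jointly convex on triples of n×n positive definite complex matrices (in the Loewner order), and for positive real scalars t₁ ≠ t₂ and t₃ > 0 (i.e., 1×1 matrices) its value is ((t₁^{1-p} − t₂^{1-p})/(t₁ − t₂))·t₃^{1+p}, while for t₁ = t₂ it is (1-p)t₁^{-p} t₃^{1+p}. Thus the function F₃(t₁,t₂,t₃) = ((t₁^{1-p}−t₂^{1-p})/(t₁−t₂))t₃^{1+p} extends to a jointly convex map on triples of positive definite matrices. -/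
open Matrix MeasureTheory
open scoped ComplexOrder

attribute [local instance] Matrix.normedAddCommGroup Matrix.normedSpace

/-- Matrix power by a real exponent via the functional calculus
(unitary diagonalization for Hermitian matrices; junk value otherwise). -/
noncomputable def mpow {n : ℕ} (A : Matrix (Fin n) (Fin n) ℂ) (q : ℝ) :
    Matrix (Fin n) (Fin n) ℂ :=
  if hA : A.IsHermitian then
    (hA.eigenvectorUnitary : Matrix (Fin n) (Fin n) ℂ) *
      Matrix.diagonal (fun i => ((hA.eigenvalues i ^ q : ℝ) : ℂ)) *
      (star (hA.eigenvectorUnitary : Matrix (Fin n) (Fin n) ℂ))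
  else 0

/-- `(A,B,C) ↦ (1-p) ∫₀¹ C^{1/2} (C^{-1/2}(λA + (1-λ)B)C^{-1/2})^{-p} C^{1/2} dλ`. -/
noncomputable def G3map {n : ℕ} (p : ℝ) (A B C : Matrix (Fin n) (Fin n) ℂ) :
    Matrix (Fin n) (Fin n) ℂ :=
  (1 - p) • ∫ l in Set.Icc (0 : ℝ) 1,
    mpow C (1 / 2) *
      mpow (mpow C (-(1 / 2)) * (l • A + (1 - l) • B) * mpow C (-(1 / 2))) (-p) *
        mpow C (1 / 2)

theorem mpow_mul {n : ℕ} {A : Matrix (Fin n) (Fin n) ℂ} (hA : A.PosDef) (q r : ℝ) :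
    mpow A q * mpow A r = mpow A (q + r) := by
  have hH := hA.1
  have hU : star (hH.eigenvectorUnitary : Matrix (Fin n) (Fin n) ℂ) * (hH.eigenvectorUnitary : Matrix (Fin n) (Fin n) ℂ) = 1 := by
    simp
  simp only [mpow, dif_pos hH]
  calc _ = (hH.eigenvectorUnitary : Matrix (Fin n) (Fin n) ℂ) * Matrix.diagonal (fun i => ((hH.eigenvalues i ^ q : ℝ) : ℂ)) * (star (hH.eigenvectorUnitary : Matrix (Fin n) (Fin n) ℂ) * (hH.eigenvectorUnitary : Matrix (Fin n) (Fin n) ℂ)) * Matrix.diagonal (fun i => ((hH.eigenvalues i ^ r : ℝ) : ℂ)) * star (hH.eigenvectorUnitary : Matrix (Fin n) (Fin n) ℂ) := by simp only [Matrix.mul_assoc]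
    _ = _ := by
      rw [hU, Matrix.mul_one, Matrix.mul_assoc _ (diagonal _) (diagonal _), Matrix.diagonal_mul_diagonal]
      congr 3
      ext i
      rw [Real.rpow_add (hA.eigenvalues_pos i)]
      simp

theorem mpow_zero' {n : ℕ} {A : Matrix (Fin n) (Fin n) ℂ} (hA : A.PosDef) :
    mpow A 0 = 1 := by
  simp [mpow, dif_pos hA.1]

theorem mpow_one' {n : ℕ} {A : Matrix (Fin n) (Fin n) ℂ} (hA : A.PosDef) :
    mpow A 1 = A := by
  conv_rhs => rw [hA.1.spectral_theorem]
  simp [mpow, dif_pos hA.1, Unitary.conjStarAlgAut_apply]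
  rfl

theorem mpow_herm {n : ℕ} {A : Matrix (Fin n) (Fin n) ℂ} (hA : A.PosDef) (q : ℝ) :
    (mpow A q)ᴴ = mpow A q := by
  simp only [mpow, dif_pos hA.1]
  simp only [star_eq_conjTranspose, conjTranspose_mul, conjTranspose_conjTranspose, diagonal_conjTranspose, Matrix.mul_assoc]
  congr 3
  ext i
  simp

theorem mpow_cfc {n : ℕ} {A : Matrix (Fin n) (Fin n) ℂ} (hA : A.IsHermitian) (q : ℝ) :
    mpow A q = cfc (fun x : ℝ => x ^ q) A := by
  rw [hA.cfc_eq]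
  simp [mpow, dif_pos hA, Matrix.IsHermitian.cfc, Unitary.conjStarAlgAut_apply]
  rfl

open scoped MatrixOrder Matrix.Norms.L2Operator in
theorem mpow_cont0 {n : ℕ} (q : ℝ) (f : ℝ → Matrix (Fin n) (Fin n) ℂ) (s : Set ℝ)
    (hf : ContinuousOn f s) (hp : ∀ x ∈ s, (f x).PosDef) : ContinuousOn (fun x => mpow (f x) q) s := by
  have h := (CFC.continuousOn_rpow (A := Matrix (Fin n) (Fin n) ℂ) q).comp hf (fun x hx => (hp x hx).isStrictlyPositive)
  refine h.congr fun x hx => ?_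
  rw [mpow_cfc (hp x hx).1]
  exact (CFC.rpow_eq_cfc_real (hp x hx).posSemidef.nonneg).symm

theorem mpow_cont {n : ℕ} (q : ℝ) (f : ℝ → Matrix (Fin n) (Fin n) ℂ) (s : Set ℝ)
    (hf : ContinuousOn f s) (hp : ∀ x ∈ s, (f x).PosDef) : ContinuousOn (fun x => mpow (f x) q) s := 
  mpow_cont0 q f s hf hp

theorem quad_diag {n : ℕ} (U : Matrix (Fin n) (Fin n) ℂ) (d : Fin n → ℝ) (u : Fin n → ℂ) :
    star u ⬝ᵥ ((U * Matrix.diagonal (fun i => ((d i : ℝ) : ℂ)) * star U) *ᵥ u) =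
      ((∑ i, ‖(star U *ᵥ u) i‖ ^ 2 * d i : ℝ) : ℂ) := by
  rw [← mulVec_mulVec, ← mulVec_mulVec, dotProduct_mulVec]
  have : star u ᵥ* U = star (star U *ᵥ u) := by
    rw [star_mulVec, star_eq_conjTranspose, conjTranspose_conjTranspose]
  rw [this]
  simp only [dotProduct, mulVec_diagonal, Pi.star_apply]
  push_cast
  refine Finset.sum_congr rfl fun i _ => ?_
  rw [← Complex.conj_mul']
  simp only [RCLike.star_def]
  ring

theorem inv_shift {n : ℕ} {A : Matrix (Fin n) (Fin n) ℂ} (hA : A.PosDef) (s : ℝ) (hs : 0 < s) :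
    (A + s • (1 : Matrix (Fin n) (Fin n) ℂ))⁻¹ =
      (hA.1.eigenvectorUnitary : Matrix (Fin n) (Fin n) ℂ) *
      Matrix.diagonal (fun i => (((hA.1.eigenvalues i + s)⁻¹ : ℝ) : ℂ)) *
      (star (hA.1.eigenvectorUnitary : Matrix (Fin n) (Fin n) ℂ)) := by
  have hH := hA.1
  set U := (hA.1.eigenvectorUnitary : Matrix (Fin n) (Fin n) ℂ) with hUdef
  have hU : star U * U = 1 := by simp [hUdef]
  have hU' : U * star U = 1 := by simp [hUdef]
  have h1 : A + s • (1 : Matrix (Fin n) (Fin n) ℂ) =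
      U * Matrix.diagonal (fun i => (((hA.1.eigenvalues i + s) : ℝ) : ℂ)) * star U := by
    have e : Matrix.diagonal (fun i => (((hA.1.eigenvalues i + s) : ℝ) : ℂ)) =
       Matrix.diagonal (fun i => ((hA.1.eigenvalues i ^ (1:ℝ) : ℝ) : ℂ)) + s • (1 : Matrix (Fin n) (Fin n) ℂ) := by
      ext i j
      by_cases h : i = j <;> simp [h, Matrix.diagonal]
    rw [e, Matrix.mul_add, Matrix.add_mul, Matrix.mul_smul, Matrix.smul_mul, Matrix.mul_one, hU']
    congr 1
    conv_lhs => rw [← mpow_one' hA]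
    simp [mpow, dif_pos hA.1, hUdef]
  apply Matrix.inv_eq_right_inv
  rw [h1]
  calc _ = U * Matrix.diagonal (fun i => (((hA.1.eigenvalues i + s) : ℝ) : ℂ)) * (star U * U) * Matrix.diagonal (fun i => (((hA.1.eigenvalues i + s)⁻¹ : ℝ) : ℂ)) * star U := by simp only [Matrix.mul_assoc]
    _ = _ := by
      rw [hU, Matrix.mul_one, Matrix.mul_assoc _ (diagonal _) (diagonal _), Matrix.diagonal_mul_diagonal]
      have : (fun i => (((hA.1.eigenvalues i + s) : ℝ) : ℂ) * (((hA.1.eigenvalues i + s)⁻¹ : ℝ) : ℂ)) = fun _ => 1 := by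
        ext i
        have := hA.eigenvalues_pos i
        rw [← Complex.ofReal_mul, mul_inv_cancel₀ (by positivity)]
        simp
      rw [this, Matrix.diagonal_one, Matrix.mul_one, hU']

/-- The normalising constant. -/
noncomputable def cst (p : ℝ) : ℝ := (∫ t in Set.Ioi 0, Real.rpowIntegrand₀₁ (1 - p) t 1)⁻¹

theorem cst_nonneg {p : ℝ} (hp0 : 0 < p) (hp1 : p < 1) : 0 ≤ cst p :=
  inv_nonneg.2 (Real.integral_rpowIntegrand₀₁_one_pos ⟨by linarith, by linarith⟩).le

theorem scal_rep {p : ℝ} (hp0 : 0 < p) (hp1 : p < 1) {x : ℝ} (hx : 0 < x) :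
    IntegrableOn (fun s : ℝ => s ^ (-p) * (x + s)⁻¹) (Set.Ioi 0) ∧
    x ^ (-p) = cst p * ∫ s in Set.Ioi (0 : ℝ), s ^ (-p) * (x + s)⁻¹ := by
  have hq : 1 - p ∈ Set.Ioo (0 : ℝ) 1 := ⟨by linarith, by linarith⟩
  have hE : Set.EqOn (fun s : ℝ => s ^ (-p) * (x + s)⁻¹)
      (fun s => Real.rpowIntegrand₀₁ (1 - p) s x * x⁻¹) (Set.Ioi 0) := by
    intro s hs
    have hs : 0 < s := hs
    simp only
    rw [Real.rpowIntegrand₀₁_eq_pow_div hq hs.le hx.le, show 1 - p - 1 = -p by ring]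
    have : s + x ≠ 0 := by positivity
    field_simp
    ring
  constructor
  · exact IntegrableOn.congr_fun ((Real.integrableOn_rpowIntegrand₀₁_Ioi hq hx.le).mul_const x⁻¹)
      hE.symm measurableSet_Ioi
  · rw [setIntegral_congr_fun measurableSet_Ioi hE, integral_mul_const, cst, ← mul_assoc,
      ← Real.rpow_eq_const_mul_integral hq hx.le, show 1 - p = 1 + -p by ring,
      Real.rpow_add hx, Real.rpow_one]
    field_simp

theorem mat_rep {p : ℝ} (hp0 : 0 < p) (hp1 : p < 1) {n : ℕ} {M : Matrix (Fin n) (Fin n) ℂ}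
    (hM : M.PosDef) (u : Fin n → ℂ) :
    IntegrableOn (fun s : ℝ => s ^ (-p) *
      (star u ⬝ᵥ ((M + s • (1 : Matrix (Fin n) (Fin n) ℂ))⁻¹ *ᵥ u)).re) (Set.Ioi 0) ∧
    star u ⬝ᵥ (mpow M (-p) *ᵥ u) = ((cst p * ∫ s in Set.Ioi (0 : ℝ), s ^ (-p) *
      (star u ⬝ᵥ ((M + s • (1 : Matrix (Fin n) (Fin n) ℂ))⁻¹ *ᵥ u)).re : ℝ) : ℂ) := by
  set w : Fin n → ℝ := fun i =>
    ‖(star (hM.1.eigenvectorUnitary : Matrix (Fin n) (Fin n) ℂ) *ᵥ u) i‖ ^ 2 with hw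
  have hE : Set.EqOn (fun s : ℝ => s ^ (-p) *
      (star u ⬝ᵥ ((M + s • (1 : Matrix (Fin n) (Fin n) ℂ))⁻¹ *ᵥ u)).re)
      (fun s => ∑ i, w i * (s ^ (-p) * (hM.1.eigenvalues i + s)⁻¹)) (Set.Ioi 0) := by
    intro s hs
    simp only
    rw [inv_shift hM s hs, quad_diag, Complex.ofReal_re, Finset.mul_sum]
    refine Finset.sum_congr rfl fun i _ => ?_
    simp only [hw]
    ring
  have hI : ∀ i ∈ Finset.univ, IntegrableOn (fun s : ℝ => w i * (s ^ (-p) * (hM.1.eigenvalues i + s)⁻¹)) (Set.Ioi 0) :=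
    fun i _ => (scal_rep hp0 hp1 (hM.eigenvalues_pos i)).1.const_mul _
  constructor
  · exact IntegrableOn.congr_fun (integrable_finsetSum _ hI) hE.symm measurableSet_Ioi
  · rw [setIntegral_congr_fun measurableSet_Ioi hE, integral_finsetSum _ hI, Finset.mul_sum]
    simp only [mpow, dif_pos hM.1]
    rw [quad_diag]
    congr 1
    refine Finset.sum_congr rfl fun i _ => ?_
    rw [integral_const_mul, (scal_rep hp0 hp1 (hM.eigenvalues_pos i)).2]
    simp only [hw]
    ring

/-- The perspective. -/
noncomputable def persp {n : ℕ} (p : ℝ) (X C : Matrix (Fin n) (Fin n) ℂ) : Matrix (Fin n) (Fin n) ℂ :=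
  mpow C (1 / 2) * mpow (mpow C (-(1 / 2)) * X * mpow C (-(1 / 2))) (-p) * mpow C (1 / 2)

theorem conj_posDef {n : ℕ} {X C : Matrix (Fin n) (Fin n) ℂ} (hX : X.PosDef) (hC : C.PosDef) :
    (mpow C (-(1 / 2)) * X * mpow C (-(1 / 2))).PosDef := by
  have h := hX.conjTranspose_mul_mul_same (B := mpow C (-(1 / 2))) (by
    apply Function.LeftInverse.injective (g := (mpow C (1/2)).mulVec)
    intro v
    rw [mulVec_mulVec, mpow_mul hC]
    norm_num [mpow_zero' hC])
  rwa [mpow_herm hC] at h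

theorem quad_conj {n : ℕ} (D R : Matrix (Fin n) (Fin n) ℂ) (hD : Dᴴ = D) (v : Fin n → ℂ) :
    star v ⬝ᵥ ((D * R * D) *ᵥ v) = star (D *ᵥ v) ⬝ᵥ (R *ᵥ (D *ᵥ v)) := by
  rw [star_mulVec, hD, ← mulVec_mulVec, ← mulVec_mulVec, dotProduct_mulVec]

theorem smul_posDef' {n : ℕ} {X : Matrix (Fin n) (Fin n) ℂ} (hX : X.PosDef) {s : ℝ} (hs : 0 < s) :
    (s • X).PosDef := hX.smul hs

theorem persp_inv {n : ℕ} {X C : Matrix (Fin n) (Fin n) ℂ} (hX : X.PosDef) (hC : C.PosDef)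
    {s : ℝ} (hs : 0 < s) :
    mpow C (1 / 2) * (mpow C (-(1 / 2)) * X * mpow C (-(1 / 2)) + s • (1 : Matrix (Fin n) (Fin n) ℂ))⁻¹ * mpow C (1 / 2)
     = C * (X + s • C)⁻¹ * C := by
  have hY : (X + s • C).PosDef := hX.add (smul_posDef' hC hs)
  set D := mpow C (1 / 2) with hD
  set E := mpow C (-(1 / 2)) with hE
  have hDE : D * E = 1 := by rw [hD, hE, mpow_mul hC]; norm_num [mpow_zero' hC]
  have hED : E * D = 1 := by rw [hD, hE, mpow_mul hC]; norm_num [mpow_zero' hC]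
  have hDD : D * D = C := by rw [hD, mpow_mul hC]; norm_num [mpow_one' hC]
  have h1 : E * X * E + s • (1 : Matrix (Fin n) (Fin n) ℂ) = E * (X + s • C) * E := by
    rw [Matrix.mul_add, Matrix.add_mul, Matrix.mul_smul, Matrix.smul_mul, ← hDD, ← Matrix.mul_assoc, hED, Matrix.one_mul, hDE]
  have h2 : (E * (X + s • C) * E)⁻¹ = D * (X + s • C)⁻¹ * D := by
    apply Matrix.inv_eq_right_inv
    calc _ = E * (X + s • C) * (E * D) * (X + s • C)⁻¹ * D := by simp only [Matrix.mul_assoc]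
      _ = E * ((X + s • C) * (X + s • C)⁻¹) * D := by rw [hED, Matrix.mul_one]; simp only [Matrix.mul_assoc]
      _ = 1 := by rw [Matrix.mul_nonsing_inv _ ((Matrix.isUnit_iff_isUnit_det _).1 hY.isUnit), Matrix.mul_one, hED]
  rw [h1, h2]
  calc _ = (D * D) * (X + s • C)⁻¹ * (D * D) := by simp only [Matrix.mul_assoc]
    _ = _ := by rw [hDD]

/-- The kernel of the integral representation. -/
noncomputable def ker {n : ℕ} (X C : Matrix (Fin n) (Fin n) ℂ) (v : Fin n → ℂ) (s : ℝ) : ℝ :=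
  (star v ⬝ᵥ ((C * (X + s • C)⁻¹ * C) *ᵥ v)).re

theorem persp_rep {p : ℝ} (hp0 : 0 < p) (hp1 : p < 1) {n : ℕ} {X C : Matrix (Fin n) (Fin n) ℂ}
    (hX : X.PosDef) (hC : C.PosDef) (v : Fin n → ℂ) :
    IntegrableOn (fun s : ℝ => s ^ (-p) * ker X C v s) (Set.Ioi 0) ∧
    star v ⬝ᵥ (persp p X C *ᵥ v) =
      ((cst p * ∫ s in Set.Ioi (0 : ℝ), s ^ (-p) * ker X C v s : ℝ) : ℂ) := by
  obtain ⟨h1, h2⟩ := mat_rep hp0 hp1 (conj_posDef hX hC) (mpow C (1 / 2) *ᵥ v)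
  have hE : Set.EqOn (fun s : ℝ => s ^ (-p) * ker X C v s) (fun s : ℝ => s ^ (-p) *
      (star (mpow C (1 / 2) *ᵥ v) ⬝ᵥ ((mpow C (-(1 / 2)) * X * mpow C (-(1 / 2)) + s • (1 : Matrix (Fin n) (Fin n) ℂ))⁻¹ *ᵥ (mpow C (1 / 2) *ᵥ v))).re) (Set.Ioi 0) := by
    intro s hs
    simp only [ker]
    rw [← persp_inv hX hC hs, quad_conj _ _ (mpow_herm hC _)]
  constructor
  · exact h1.congr_fun hE.symm measurableSet_Ioi
  · rw [setIntegral_congr_fun measurableSet_Ioi hE, persp, quad_conj _ _ (mpow_herm hC _), h2]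

theorem re_symm {n : ℕ} (a b : Fin n → ℂ) : (star a ⬝ᵥ b).re = (star b ⬝ᵥ a).re := by
  simp only [dotProduct, Complex.re_sum]
  refine Finset.sum_congr rfl fun i _ => ?_
  simp
  ring

theorem variational {n : ℕ} {Y C : Matrix (Fin n) (Fin n) ℂ} (hY : Y.PosDef) (hC : C.IsHermitian)
    (v w : Fin n → ℂ) :
    2 * (star w ⬝ᵥ (C *ᵥ v)).re - (star w ⬝ᵥ (Y *ᵥ w)).re ≤
      (star v ⬝ᵥ ((C * Y⁻¹ * C) *ᵥ v)).re := by
  have hdet := (Matrix.isUnit_iff_isUnit_det _).1 hY.isUnit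
  set z := Y⁻¹ *ᵥ (C *ᵥ v) with hz
  have hYz : Y *ᵥ z = C *ᵥ v := by
    rw [hz, mulVec_mulVec, Matrix.mul_nonsing_inv _ hdet, one_mulVec]
  have h := hY.posSemidef.dotProduct_mulVec_nonneg (w - z)
  have h := (Complex.le_def.1 h).1
  have e1 : star v ⬝ᵥ ((C * Y⁻¹ * C) *ᵥ v) = star (C *ᵥ v) ⬝ᵥ z := by
    rw [quad_conj _ _ hC]
  have e2 : star z ⬝ᵥ (Y *ᵥ w) = star (C *ᵥ v) ⬝ᵥ w := by
    rw [dotProduct_mulVec, ← hYz, star_mulVec Y z, hY.1.eq]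
  have e3 : (star (C *ᵥ v) ⬝ᵥ w).re = (star w ⬝ᵥ (C *ᵥ v)).re := re_symm _ _
  have e4 : (star (C *ᵥ v) ⬝ᵥ z).re = (star z ⬝ᵥ (C *ᵥ v)).re := re_symm _ _
  rw [star_sub, mulVec_sub, sub_dotProduct, dotProduct_sub, dotProduct_sub, e2, hYz] at h
  simp only [Complex.sub_re, Complex.zero_re] at h
  rw [e1]
  linarith

theorem variational_eq {n : ℕ} {Y C : Matrix (Fin n) (Fin n) ℂ} (hY : Y.PosDef) (hC : C.IsHermitian)
    (v : Fin n → ℂ) : ∃ w : Fin n → ℂ,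
    2 * (star w ⬝ᵥ (C *ᵥ v)).re - (star w ⬝ᵥ (Y *ᵥ w)).re =
      (star v ⬝ᵥ ((C * Y⁻¹ * C) *ᵥ v)).re := by
  have hdet := (Matrix.isUnit_iff_isUnit_det _).1 hY.isUnit
  refine ⟨Y⁻¹ *ᵥ (C *ᵥ v), ?_⟩
  set z := Y⁻¹ *ᵥ (C *ᵥ v) with hz
  have hYz : Y *ᵥ z = C *ᵥ v := by
    rw [hz, mulVec_mulVec, Matrix.mul_nonsing_inv _ hdet, one_mulVec]
  have e1 : star v ⬝ᵥ ((C * Y⁻¹ * C) *ᵥ v) = star (C *ᵥ v) ⬝ᵥ z := by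
    rw [quad_conj _ _ hC]
  have e4 : (star (C *ᵥ v) ⬝ᵥ z).re = (star z ⬝ᵥ (C *ᵥ v)).re := re_symm _ _
  rw [e1, hYz, e4]
  ring

theorem combo_posDef {n : ℕ} {X₁ X₂ : Matrix (Fin n) (Fin n) ℂ} (h1 : X₁.PosDef) (h2 : X₂.PosDef)
    {α : ℝ} (h0 : 0 ≤ α) (h1' : α ≤ 1) : (α • X₁ + (1 - α) • X₂).PosDef := by
  rcases h0.eq_or_lt with rfl | h0
  · simpa using h2
  rcases h1'.eq_or_lt with rfl | h1'
  · simpa using h1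
  · exact (smul_posDef' h1 h0).add (smul_posDef' h2 (by linarith))

theorem ker_convex {n : ℕ} {X₁ C₁ X₂ C₂ : Matrix (Fin n) (Fin n) ℂ} (hX₁ : X₁.PosDef)
    (hC₁ : C₁.PosDef) (hX₂ : X₂.PosDef) (hC₂ : C₂.PosDef) {α : ℝ} (h0 : 0 ≤ α) (h1 : α ≤ 1)
    (v : Fin n → ℂ) {s : ℝ} (hs : 0 < s) :
    ker (α • X₁ + (1 - α) • X₂) (α • C₁ + (1 - α) • C₂) v s ≤
      α * ker X₁ C₁ v s + (1 - α) * ker X₂ C₂ v s := by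
  have hY₁ : (X₁ + s • C₁).PosDef := hX₁.add (smul_posDef' hC₁ hs)
  have hY₂ : (X₂ + s • C₂).PosDef := hX₂.add (smul_posDef' hC₂ hs)
  have hC := combo_posDef hC₁ hC₂ h0 h1
  have hY := (combo_posDef hX₁ hX₂ h0 h1).add (smul_posDef' hC hs)
  obtain ⟨w, hw⟩ := variational_eq hY hC.1 v
  have a1 := mul_le_mul_of_nonneg_left (variational hY₁ hC₁.1 v w) h0
  have a2 := mul_le_mul_of_nonneg_left (variational hY₂ hC₂.1 v w) (sub_nonneg.2 h1)
  unfold ker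
  rw [← hw]
  refine le_trans (le_of_eq ?_) (add_le_add a1 a2)
  simp only [add_mulVec, smul_mulVec, dotProduct_add, dotProduct_smul, Complex.add_re, Complex.smul_re, smul_eq_mul]
  ring

theorem persp_convex {p : ℝ} (hp0 : 0 < p) (hp1 : p < 1) {n : ℕ}
    {X₁ C₁ X₂ C₂ : Matrix (Fin n) (Fin n) ℂ} (hX₁ : X₁.PosDef)
    (hC₁ : C₁.PosDef) (hX₂ : X₂.PosDef) (hC₂ : C₂.PosDef) {α : ℝ} (h0 : 0 ≤ α) (h1 : α ≤ 1)
    (v : Fin n → ℂ) :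
    0 ≤ star v ⬝ᵥ ((α • persp p X₁ C₁ + (1 - α) • persp p X₂ C₂ -
      persp p (α • X₁ + (1 - α) • X₂) (α • C₁ + (1 - α) • C₂)) *ᵥ v) := by
  obtain ⟨i1, e1⟩ := persp_rep hp0 hp1 hX₁ hC₁ v
  obtain ⟨i2, e2⟩ := persp_rep hp0 hp1 hX₂ hC₂ v
  obtain ⟨i3, e3⟩ := persp_rep hp0 hp1 (combo_posDef hX₁ hX₂ h0 h1) (combo_posDef hC₁ hC₂ h0 h1) v
  simp only [sub_mulVec, add_mulVec, smul_mulVec, dotProduct_add, dotProduct_sub, dotProduct_smul]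
  rw [e1, e2, e3]
  simp only [Complex.real_smul]
  norm_cast
  have key : (∫ s in Set.Ioi (0 : ℝ), s ^ (-p) * ker (α • X₁ + (1 - α) • X₂) (α • C₁ + (1 - α) • C₂) v s)
     ≤ ∫ s in Set.Ioi (0 : ℝ), (α * (s ^ (-p) * ker X₁ C₁ v s) + (1 - α) * (s ^ (-p) * ker X₂ C₂ v s)) := by
    refine setIntegral_mono_on i3 ((i1.const_mul _).add (i2.const_mul _)) measurableSet_Ioi fun s hs => ?_
    have hs : 0 < s := hs
    have := mul_le_mul_of_nonneg_left (ker_convex hX₁ hC₁ hX₂ hC₂ h0 h1 v hs) (Real.rpow_nonneg hs.le (-p))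
    linarith
  rw [integral_add (i1.const_mul _) (i2.const_mul _), integral_const_mul, integral_const_mul] at key
  have := mul_le_mul_of_nonneg_left key (cst_nonneg hp0 hp1)
  linarith

theorem posSemidef_of_quad {n : ℕ} {M : Matrix (Fin n) (Fin n) ℂ}
    (h : ∀ v : Fin n → ℂ, 0 ≤ star v ⬝ᵥ (M *ᵥ v)) : M.PosSemidef := by
  rw [← Matrix.isPositive_toEuclideanLin_iff, LinearMap.isPositive_iff_complex]
  intro x
  have hx := h x.ofLp
  have e : inner ℂ ((Matrix.toEuclideanLin M) x) x = star (star x.ofLp ⬝ᵥ (M *ᵥ x.ofLp)) := by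
    rw [EuclideanSpace.inner_eq_star_dotProduct, star_dotProduct]
    simp [dotProduct_comm]
  obtain ⟨h1, h2⟩ := Complex.le_def.1 hx
  rw [e]
  constructor
  · apply Complex.ext
    · simp
    · simpa using h2.symm
  · simpa using h1

/-- Integrability on the unit interval. -/
abbrev IntOn {E : Type*} [NormedAddCommGroup E] (F : ℝ → E) : Prop := IntegrableOn F (Set.Icc 0 1)

theorem persp_integrable {n : ℕ} (p : ℝ) {A B C : Matrix (Fin n) (Fin n) ℂ} (hA : A.PosDef)
    (hB : B.PosDef) (hC : C.PosDef) :
    IntOn (fun l : ℝ => persp p (l • A + (1 - l) • B) C) := by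
  apply ContinuousOn.integrableOn_Icc
  unfold persp
  have h := mpow_cont (-p) (fun l : ℝ => mpow C (-(1 / 2)) * (l • A + (1 - l) • B) * mpow C (-(1 / 2)))
    (Set.Icc 0 1) (by fun_prop) (fun l hl => conj_posDef (combo_posDef hA hB hl.1 hl.2) hC)
  exact (continuousOn_const.mul h).mul continuousOn_const

/-- The quadratic form as a linear map in the matrix. -/
noncomputable def quadL {n : ℕ} (v : Fin n → ℂ) : Matrix (Fin n) (Fin n) ℂ →ₗ[ℝ] ℂ where
  toFun M := star v ⬝ᵥ (M *ᵥ v)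
  map_add' M N := by rw [add_mulVec, dotProduct_add]
  map_smul' r M := by rw [smul_mulVec, dotProduct_smul]; rfl

theorem posSemidef_integral {n : ℕ} {F : ℝ → Matrix (Fin n) (Fin n) ℂ}
    (hF : IntOn F)
    (h : ∀ l ∈ Set.Icc (0 : ℝ) 1, ∀ v : Fin n → ℂ, 0 ≤ star v ⬝ᵥ (F l *ᵥ v)) :
    (∫ l in Set.Icc (0 : ℝ) 1, F l).PosSemidef := by
  apply posSemidef_of_quad
  intro v
  have e := (LinearMap.toContinuousLinearMap (quadL v)).integral_comp_comm hF
  have e' : star v ⬝ᵥ ((∫ l in Set.Icc (0 : ℝ) 1, F l) *ᵥ v) =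
      ∫ l in Set.Icc (0 : ℝ) 1, (((star v ⬝ᵥ (F l *ᵥ v)).re : ℝ) : ℂ) := by
    refine e.symm.trans (setIntegral_congr_fun measurableSet_Icc fun l hl => ?_)
    obtain ⟨h1, h2⟩ := Complex.le_def.1 (h l hl v)
    exact Complex.ext rfl h2.symm
  rw [e', integral_complex_ofReal, Complex.zero_le_real]
  exact setIntegral_nonneg measurableSet_Icc fun l hl => (Complex.le_def.1 (h l hl v)).1

theorem G3map_eq {n : ℕ} (p : ℝ) (A B C : Matrix (Fin n) (Fin n) ℂ) :
    G3map p A B C = (1 - p) • ∫ l in Set.Icc (0 : ℝ) 1, persp p (l • A + (1 - l) • B) C := rfl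

theorem G3_convex {p : ℝ} (hp0 : 0 < p) (hp1 : p < 1) {n : ℕ}
    {A₁ B₁ C₁ A₂ B₂ C₂ : Matrix (Fin n) (Fin n) ℂ} (hA₁ : A₁.PosDef) (hB₁ : B₁.PosDef)
    (hC₁ : C₁.PosDef) (hA₂ : A₂.PosDef) (hB₂ : B₂.PosDef) (hC₂ : C₂.PosDef) {α : ℝ}
    (h0 : 0 ≤ α) (h1 : α ≤ 1) :
    ((α • G3map p A₁ B₁ C₁ + (1 - α) • G3map p A₂ B₂ C₂) -
        G3map p (α • A₁ + (1 - α) • A₂) (α • B₁ + (1 - α) • B₂)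
          (α • C₁ + (1 - α) • C₂)).PosSemidef := by
  have i1 := persp_integrable p hA₁ hB₁ hC₁
  have i2 := persp_integrable p hA₂ hB₂ hC₂
  have i3 := persp_integrable p (combo_posDef hA₁ hA₂ h0 h1) (combo_posDef hB₁ hB₂ h0 h1)
    (combo_posDef hC₁ hC₂ h0 h1)
  have i12 := (Integrable.smul α i1).add (Integrable.smul (1 - α) i2)
  have key := posSemidef_integral (Integrable.sub i12 i3) (by
    intro l hl v
    have := persp_convex hp0 hp1 (combo_posDef hA₁ hB₁ hl.1 hl.2) hC₁
      (combo_posDef hA₂ hB₂ hl.1 hl.2) hC₂ h0 h1 v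
    have e : l • (α • A₁ + (1 - α) • A₂) + (1 - l) • (α • B₁ + (1 - α) • B₂) =
      α • (l • A₁ + (1 - l) • B₁) + (1 - α) • (l • A₂ + (1 - l) • B₂) := by module
    simp only [Pi.sub_apply, Pi.add_apply, Pi.smul_apply]
    rw [e]
    exact this)
  have e : (∫ l in Set.Icc (0 : ℝ) 1, (((α • fun l : ℝ => persp p (l • A₁ + (1 - l) • B₁) C₁) +
      ((1 - α) • fun l : ℝ => persp p (l • A₂ + (1 - l) • B₂) C₂)) -
      (fun l : ℝ => persp p (l • (α • A₁ + (1 - α) • A₂) + (1 - l) • (α • B₁ + (1 - α) • B₂))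
        (α • C₁ + (1 - α) • C₂))) l) = _ :=
    (integral_sub' i12 i3).trans (by
      rw [integral_add' (Integrable.smul α i1) (Integrable.smul (1 - α) i2)])
  rw [e] at key
  simp only [Pi.smul_apply] at key
  rw [integral_smul, integral_smul] at key
  have hp : 0 ≤ 1 - p := by linarith
  have := key.smul hp
  rw [G3map_eq, G3map_eq, G3map_eq]
  convert this using 1
  module

theorem mpow_scalar {n : ℕ} (t q : ℝ) :
    mpow (t • (1 : Matrix (Fin n) (Fin n) ℂ)) q = (t ^ q) • 1 := by
  have hH : (t • (1 : Matrix (Fin n) (Fin n) ℂ)).IsHermitian := by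
    simp [Matrix.IsHermitian, conjTranspose_smul]
  rw [mpow_cfc hH, ← Algebra.algebraMap_eq_smul_one, cfc_algebraMap, Algebra.algebraMap_eq_smul_one]

theorem persp_scalar {p t₃ x : ℝ} (h3 : 0 < t₃) (hx : 0 < x) {n : ℕ} :
    persp p (x • (1 : Matrix (Fin n) (Fin n) ℂ)) (t₃ • 1) = (x ^ (-p) * t₃ ^ (1 + p)) • 1 := by
  simp only [persp, mpow_scalar, smul_mul_smul_comm, Matrix.one_mul]
  congr 1
  rw [Real.mul_rpow (by positivity) (by positivity), Real.mul_rpow (by positivity) (by positivity),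
    ← Real.rpow_mul h3.le]
  calc _ = x ^ (-p) * (t₃ ^ (1 / 2 : ℝ) * t₃ ^ (-(1 / 2) * -p) * t₃ ^ (-(1 / 2) * -p) * t₃ ^ (1 / 2 : ℝ)) := by ring
    _ = _ := by
      rw [← Real.rpow_add h3, ← Real.rpow_add h3, ← Real.rpow_add h3]
      congr 2
      ring

theorem G3_scalar {p t₁ t₂ t₃ : ℝ} (h1 : 0 < t₁) (h2 : 0 < t₂) (h3 : 0 < t₃) {n : ℕ} :
    G3map p (t₁ • (1 : Matrix (Fin n) (Fin n) ℂ)) (t₂ • 1) (t₃ • 1) =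
      ((1 - p) * (∫ l in (0 : ℝ)..1, ((t₁ - t₂) * l + t₂) ^ (-p)) * t₃ ^ (1 + p)) • 1 := by
  rw [G3map_eq]
  have : Set.EqOn (fun l : ℝ => persp p (l • (t₁ • (1 : Matrix (Fin n) (Fin n) ℂ)) + (1 - l) • (t₂ • 1)) (t₃ • 1))
      (fun l => (((t₁ - t₂) * l + t₂) ^ (-p) * t₃ ^ (1 + p)) • 1) (Set.Icc 0 1) := by
    intro l hl
    have hx : 0 < (t₁ - t₂) * l + t₂ := by
      obtain ⟨a, b⟩ := hl
      have : 0 < min t₁ t₂ := lt_min h1 h2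
      nlinarith [mul_le_mul_of_nonneg_left (min_le_left t₁ t₂) a,
        mul_le_mul_of_nonneg_left (min_le_right t₁ t₂) (sub_nonneg.2 b)]
    simp only
    rw [← persp_scalar h3 hx]
    congr 1
    module
  rw [setIntegral_congr_fun measurableSet_Icc this, integral_smul_const, integral_mul_const,
    smul_smul, integral_Icc_eq_integral_Ioc, ← intervalIntegral.integral_of_le zero_le_one, mul_assoc]

theorem stmt13 (p : ℝ) (hp0 : 0 < p) (hp1 : p < 1) :
    (∀ (n : ℕ) (A₁ B₁ C₁ A₂ B₂ C₂ : Matrix (Fin n) (Fin n) ℂ),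
      A₁.PosDef → B₁.PosDef → C₁.PosDef → A₂.PosDef → B₂.PosDef → C₂.PosDef →
      ∀ α : ℝ, 0 ≤ α → α ≤ 1 →
      ((α • G3map p A₁ B₁ C₁ + (1 - α) • G3map p A₂ B₂ C₂) -
        G3map p (α • A₁ + (1 - α) • A₂) (α • B₁ + (1 - α) • B₂)
          (α • C₁ + (1 - α) • C₂)).PosSemidef) ∧
    (∀ t₁ t₂ t₃ : ℝ, 0 < t₁ → 0 < t₂ → 0 < t₃ → t₁ ≠ t₂ →
      G3map p (t₁ • (1 : Matrix (Fin 1) (Fin 1) ℂ)) (t₂ • 1) (t₃ • 1) =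
        ((t₁ ^ (1 - p) - t₂ ^ (1 - p)) / (t₁ - t₂) * t₃ ^ (1 + p)) • 1) ∧
    (∀ t₁ t₃ : ℝ, 0 < t₁ → 0 < t₃ →
      G3map p (t₁ • (1 : Matrix (Fin 1) (Fin 1) ℂ)) (t₁ • 1) (t₃ • 1) =
        ((1 - p) * t₁ ^ (-p) * t₃ ^ (1 + p)) • 1) := by
  refine ⟨?_, ?_, ?_⟩
  · intro n A₁ B₁ C₁ A₂ B₂ C₂ hA₁ hB₁ hC₁ hA₂ hB₂ hC₂ α h0 h1
    exact G3_convex hp0 hp1 hA₁ hB₁ hC₁ hA₂ hB₂ hC₂ h0 h1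
  · intro t₁ t₂ t₃ h1 h2 h3 hne
    rw [G3_scalar h1 h2 h3]
    congr 1
    have hd : t₁ - t₂ ≠ 0 := sub_ne_zero.2 hne
    have hq : 1 - p ≠ 0 := by linarith
    rw [intervalIntegral.integral_comp_mul_add (fun x => x ^ (-p)) hd, integral_rpow (Or.inl (by linarith)),
      show -p + 1 = 1 - p by ring]
    simp only [mul_one, mul_zero, zero_add, sub_add_cancel, smul_eq_mul]
    field_simp
  · intro t₁ t₃ h1 h3
    rw [G3_scalar h1 h1 h3]
    simp
end

section
/- Let 0 < p ≤ 1 and λ ∈ [0,1]. The map A ↦ (λA^p + (1-λ)I)^{1/p} is concave on n×n positive definite complex matrices: for positive definite A₁, A₂ and α ∈ [0,1], (λ(αA₁+(1-α)A₂)^p + (1-λ)I)^{1/p} ≥ α(λA₁^p + (1-λ)I)^{1/p} + (1-α)(λA₂^p + (1-λ)I)^{1/p} in the Loewner order. -/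
open Matrix
open scoped ComplexOrder

section helpers

variable {n : ℕ}

/-- squared coordinates of `v` in the eigenbasis of `A` -/
noncomputable def wgt {A : Matrix (Fin n) (Fin n) ℂ} (hA : A.IsHermitian) (v : Fin n → ℂ)
    (j : Fin n) : ℝ :=
  ‖(star (hA.eigenvectorUnitary : Matrix (Fin n) (Fin n) ℂ) *ᵥ v) j‖ ^ 2

/-- quadratic form of `g(A)` in the eigenbasis -/
noncomputable def qS {A : Matrix (Fin n) (Fin n) ℂ} (hA : A.IsHermitian) (g : ℝ → ℝ)
    (v : Fin n → ℂ) : ℝ :=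
  ∑ j, g (hA.eigenvalues j) * wgt hA v j

lemma cfc_eq_prod {A : Matrix (Fin n) (Fin n) ℂ} (hA : A.IsHermitian) (g : ℝ → ℝ) :
    cfc g A = (hA.eigenvectorUnitary : Matrix (Fin n) (Fin n) ℂ) *
      Matrix.diagonal (fun i => ((g (hA.eigenvalues i) : ℝ) : ℂ)) *
      (star (hA.eigenvectorUnitary : Matrix (Fin n) (Fin n) ℂ)) := by
  rw [hA.cfc_eq, Matrix.IsHermitian.cfc, Unitary.conjStarAlgAut_apply]
  rfl

lemma mpow_eq_cfc {A : Matrix (Fin n) (Fin n) ℂ} (hA : A.IsHermitian) (q : ℝ) :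
    mpow A q = cfc (fun x : ℝ => x ^ q) A := by
  rw [cfc_eq_prod hA, mpow, dif_pos hA]

lemma qS_eq {A : Matrix (Fin n) (Fin n) ℂ} (hA : A.IsHermitian) (g : ℝ → ℝ)
    (v : Fin n → ℂ) : star v ⬝ᵥ (cfc g A *ᵥ v) = ((qS hA g v : ℝ) : ℂ) := by
  rw [cfc_eq_prod hA, ← Matrix.mulVec_mulVec, ← Matrix.mulVec_mulVec, Matrix.dotProduct_mulVec]
  have h : star v ᵥ* (hA.eigenvectorUnitary : Matrix (Fin n) (Fin n) ℂ)
      = star (star (hA.eigenvectorUnitary : Matrix (Fin n) (Fin n) ℂ) *ᵥ v) := by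
    rw [Matrix.star_mulVec, Matrix.star_eq_conjTranspose, Matrix.conjTranspose_conjTranspose]
  rw [h]
  simp only [dotProduct, Matrix.mulVec_diagonal, qS, wgt, Complex.ofReal_sum]
  refine Finset.sum_congr rfl fun j _ => ?_
  push_cast
  rw [← Complex.conj_mul']
  simp only [Pi.star_apply, RCLike.star_def]
  ring

lemma cont_spec (A : Matrix (Fin n) (Fin n) ℂ) (g : ℝ → ℝ) : ContinuousOn g (spectrum ℝ A) :=
  A.finite_real_spectrum.continuousOn g

lemma mpow_comp {A : Matrix (Fin n) (Fin n) ℂ} (hA : A.IsHermitian) (lam p q : ℝ) :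
    mpow (lam • mpow A p + (1 - lam) • (1 : Matrix (Fin n) (Fin n) ℂ)) q
      = cfc (fun x : ℝ => (lam * x ^ p + (1 - lam)) ^ q) A := by
  have hA' : IsSelfAdjoint A := hA
  have h1 : lam • mpow A p + (1 - lam) • (1 : Matrix (Fin n) (Fin n) ℂ)
      = cfc (fun x : ℝ => lam * x ^ p + (1 - lam)) A := by
    rw [cfc_add (a := A) (fun x : ℝ => lam * x ^ p) (fun _ => 1 - lam) (cont_spec _ _)
      (cont_spec _ _), cfc_const_mul lam _ A (cont_spec _ _), cfc_const _ A hA', mpow_eq_cfc hA,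
      Algebra.algebraMap_eq_smul_one]
  have h2 : (cfc (fun x : ℝ => lam * x ^ p + (1 - lam)) A).IsHermitian := cfc_predicate _ A
  rw [h1, mpow_eq_cfc h2, ← cfc_comp' (fun x : ℝ => x ^ q) _ A
    ((A.finite_real_spectrum.image _).continuousOn _) (cont_spec _ _) hA']

lemma wgt_nonneg {A : Matrix (Fin n) (Fin n) ℂ} (hA : A.IsHermitian) (v : Fin n → ℂ)
    (j : Fin n) : 0 ≤ wgt hA v j := by unfold wgt; positivity

lemma qS_one {A : Matrix (Fin n) (Fin n) ℂ} (hA : A.IsHermitian) (v : Fin n → ℂ) :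
    ((qS hA (fun _ => 1) v : ℝ) : ℂ) = star v ⬝ᵥ v := by
  rw [← qS_eq, cfc_const _ A (show IsSelfAdjoint A from hA)]
  simp

lemma qS_id {A : Matrix (Fin n) (Fin n) ℂ} (hA : A.IsHermitian) (v : Fin n → ℂ) :
    ((qS hA (fun x => x) v : ℝ) : ℂ) = star v ⬝ᵥ (A *ᵥ v) := by
  rw [← qS_eq, cfc_id' ℝ A (show IsSelfAdjoint A from hA)]

lemma qS_linear {A : Matrix (Fin n) (Fin n) ℂ} (hA : A.IsHermitian) (r s : ℝ) (g h : ℝ → ℝ)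
    (v : Fin n → ℂ) :
    qS hA (fun x => r * g x + s * h x) v = r * qS hA g v + s * qS hA h v := by
  simp only [qS, Finset.mul_sum, ← Finset.sum_add_distrib]
  refine Finset.sum_congr rfl fun j _ => ?_
  ring

lemma qS_congr {A : Matrix (Fin n) (Fin n) ℂ} (hA : A.PosDef) {g h : ℝ → ℝ}
    (hgh : ∀ x, 0 < x → g x = h x) (v : Fin n → ℂ) :
    qS hA.isHermitian g v = qS hA.isHermitian h v := by
  simp only [qS]
  exact Finset.sum_congr rfl fun j _ => by rw [hgh _ (hA.eigenvalues_pos j)]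

lemma scalar_upper {x k t a b s : ℝ} (hx : 0 < x) (hk : 0 < k) (ht : 0 < t) (hs0 : 0 ≤ s)
    (hs : s ≤ a + b) :
    x * k / (t * x + k) * s ^ 2 ≤ x * a ^ 2 + t⁻¹ * (k * b ^ 2) := by
  have h1 : s ^ 2 ≤ (a + b) ^ 2 := by gcongr
  have h2 : x * k / (t * x + k) * s ^ 2 ≤ x * k / (t * x + k) * (a + b) ^ 2 := by gcongr
  refine h2.trans ?_
  have h3 : x * a ^ 2 + t⁻¹ * (k * b ^ 2) - x * k / (t * x + k) * (a + b) ^ 2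
      = (t * x * a - k * b) ^ 2 / (t * (t * x + k)) := by
    field_simp
    ring
  have h4 : 0 ≤ (t * x * a - k * b) ^ 2 / (t * (t * x + k)) := by positivity
  linarith

lemma qS_upper {A : Matrix (Fin n) (Fin n) ℂ} (hA : A.PosDef) {x k : ℝ → ℝ}
    (hx : ∀ a, 0 < a → 0 < x a) (hk : ∀ a, 0 < a → 0 < k a) {t : ℝ} (ht : 0 < t)
    (u w : Fin n → ℂ) :
    qS hA.isHermitian (fun a => x a * k a / (t * x a + k a)) (u + w)
      ≤ qS hA.isHermitian x u + t⁻¹ * qS hA.isHermitian k w := by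
  simp only [qS, Finset.mul_sum, ← Finset.sum_add_distrib, wgt, Matrix.mulVec_add, Pi.add_apply]
  refine Finset.sum_le_sum fun j _ => ?_
  have hj := hA.eigenvalues_pos j
  exact scalar_upper (hx _ hj) (hk _ hj) ht (norm_nonneg _) (norm_add_le _ _)

lemma qS_split {A : Matrix (Fin n) (Fin n) ℂ} (hA : A.PosDef) {x k : ℝ → ℝ}
    (hx : ∀ a, 0 < a → 0 < x a) (hk : ∀ a, 0 < a → 0 < k a) {t : ℝ} (ht : 0 < t)
    (v : Fin n → ℂ) : ∃ u w : Fin n → ℂ, u + w = v ∧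
    qS hA.isHermitian x u + t⁻¹ * qS hA.isHermitian k w
      = qS hA.isHermitian (fun a => x a * k a / (t * x a + k a)) v := by
  set U : Matrix (Fin n) (Fin n) ℂ := (hA.isHermitian.eigenvectorUnitary :
    Matrix (Fin n) (Fin n) ℂ) with hU
  have hUU : star U * U = 1 := Unitary.coe_star_mul_self _
  have hUU' : U * star U = 1 := Unitary.coe_mul_star_self _
  set e := hA.isHermitian.eigenvalues with he
  have hep : ∀ j, 0 < e j := hA.eigenvalues_pos
  set c := star U *ᵥ v with hc
  refine ⟨U *ᵥ (fun j => ((k (e j) / (t * x (e j) + k (e j)) : ℝ) : ℂ) * c j),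
    U *ᵥ (fun j => ((t * x (e j) / (t * x (e j) + k (e j)) : ℝ) : ℂ) * c j), ?_, ?_⟩
  · rw [← Matrix.mulVec_add]
    have : ((fun j => ((k (e j) / (t * x (e j) + k (e j)) : ℝ) : ℂ) * c j) +
        fun j => ((t * x (e j) / (t * x (e j) + k (e j)) : ℝ) : ℂ) * c j) = c := by
      funext j
      have := hx _ (hep j)
      have := hk _ (hep j)
      simp only [Pi.add_apply]
      rw [← add_mul, ← Complex.ofReal_add, ← add_div, add_comm (k _), div_self (by positivity)]
      simp
    rw [this, hc, Matrix.mulVec_mulVec, hUU', Matrix.one_mulVec]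
  · simp only [qS, wgt, ← hU, Matrix.mulVec_mulVec, hUU, Matrix.one_mulVec, ← he, ← hc,
      Finset.mul_sum, ← Finset.sum_add_distrib, norm_mul, mul_pow, Complex.norm_real,
      Real.norm_eq_abs, sq_abs]
    refine Finset.sum_congr rfl fun j _ => ?_
    have := hx _ (hep j)
    have := hk _ (hep j)
    field_simp
    ring

lemma qS_smul {A : Matrix (Fin n) (Fin n) ℂ} (hA : A.IsHermitian) (c : ℝ) (g : ℝ → ℝ)
    (v : Fin n → ℂ) : qS hA (fun x => c * g x) v = c * qS hA g v := by
  simp only [qS, Finset.mul_sum, mul_assoc]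

lemma key_t {A₁ A₂ A : Matrix (Fin n) (Fin n) ℂ} (h₁ : A₁.PosDef) (h₂ : A₂.PosDef) (h : A.PosDef)
    {x k : ℝ → ℝ} (hx : ∀ a, 0 < a → 0 < x a) (hk : ∀ a, 0 < a → 0 < k a) {t : ℝ} (ht : 0 < t)
    {c : ℝ} (hc : 0 < c) {α : ℝ} (hα0 : 0 ≤ α) (hα1 : α ≤ 1)
    (hX : ∀ u, α * qS h₁.isHermitian x u + (1 - α) * qS h₂.isHermitian x u
      ≤ c * qS h.isHermitian x u)
    (hK : ∀ u, α * qS h₁.isHermitian k u + (1 - α) * qS h₂.isHermitian k u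
      ≤ qS h.isHermitian k u) (v : Fin n → ℂ) :
    α * qS h₁.isHermitian (fun a => x a * k a / (t * x a + k a)) v
      + (1 - α) * qS h₂.isHermitian (fun a => x a * k a / (t * x a + k a)) v
      ≤ qS h.isHermitian (fun a => (c * x a) * k a / (t * (c * x a) + k a)) v := by
  obtain ⟨u, w, rfl, huw⟩ := qS_split h (x := fun a => c * x a) (k := k)
    (fun a ha => mul_pos hc (hx a ha)) hk ht v
  rw [← huw, qS_smul]
  have e1 := mul_le_mul_of_nonneg_left (qS_upper h₁ hx hk ht u w) hα0
  have e2 := mul_le_mul_of_nonneg_left (qS_upper h₂ hx hk ht u w) (sub_nonneg.2 hα1)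
  have e3 := mul_le_mul_of_nonneg_left (hK w) (inv_pos.2 ht).le
  have e4 := hX u
  linarith

open MeasureTheory Set in
lemma qS_integral {p : ℝ} (hp : p ∈ Ioo (0:ℝ) 1) : ∃ μ : Measure ℝ,
    ∀ (A : Matrix (Fin n) (Fin n) ℂ) (hA : A.PosDef) (x k : ℝ → ℝ)
    (_ : ∀ a, 0 < a → 0 < x a) (_ : ∀ a, 0 < a → 0 < k a) (v : Fin n → ℂ),
    IntegrableOn (fun t => t ^ (p - 1) *
      qS hA.isHermitian (fun a => x a * k a / (t * x a + k a)) v) (Ioi 0) μ ∧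
    ∫ t in Ioi 0, t ^ (p - 1) *
      qS hA.isHermitian (fun a => x a * k a / (t * x a + k a)) v ∂μ
      = qS hA.isHermitian (fun a => x a ^ (1 - p) * k a ^ p) v := by
  obtain ⟨μ, hμ⟩ := Real.exists_measure_rpow_eq_integral_rpowIntegrand₀₁ hp
  refine ⟨μ, fun A hA x k hx hk v => ?_⟩
  set e := hA.isHermitian.eigenvalues with he
  have hep : ∀ j, 0 < e j := hA.eigenvalues_pos
  have hq : ∀ j, 0 < k (e j) / x (e j) := fun j => div_pos (hk _ (hep j)) (hx _ (hep j))
  have heq : EqOn (fun t => ∑ j, (x (e j) * wgt hA.isHermitian v j) *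
        Real.rpowIntegrand₀₁ p t (k (e j) / x (e j)))
      (fun t => t ^ (p - 1) *
      qS hA.isHermitian (fun a => x a * k a / (t * x a + k a)) v) (Ioi 0) := by
    intro t ht
    have ht' : 0 < t := ht
    simp only [qS, Finset.mul_sum]
    refine Finset.sum_congr rfl fun j _ => ?_
    rw [Real.rpowIntegrand₀₁_eq_pow_div hp ht'.le (hq j).le, ← he]
    have := hx _ (hep j)
    have := hk _ (hep j)
    field_simp
  have hint : ∀ j ∈ Finset.univ, IntegrableOn (fun t => (x (e j) * wgt hA.isHermitian v j) *
        Real.rpowIntegrand₀₁ p t (k (e j) / x (e j))) (Ioi 0) μ := fun j _ =>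
    (hμ _ (hq j).le).1.const_mul _
  constructor
  · exact (integrable_finsetSum _ hint).congr
      ((ae_restrict_mem measurableSet_Ioi).mono fun t ht => heq ht)
  · rw [← setIntegral_congr_fun measurableSet_Ioi heq, integral_finsetSum _ hint, qS]
    refine Finset.sum_congr rfl fun j _ => ?_
    rw [integral_const_mul, ← (hμ _ (hq j).le).2, ← he]
    have h1 := hx _ (hep j)
    have h2 := hk _ (hep j)
    rw [Real.div_rpow h2.le h1.le, Real.rpow_sub h1, Real.rpow_one]
    field_simp

open MeasureTheory Set in
lemma key_p {A₁ A₂ A : Matrix (Fin n) (Fin n) ℂ} (h₁ : A₁.PosDef) (h₂ : A₂.PosDef) (h : A.PosDef)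
    {x k : ℝ → ℝ} (hx : ∀ a, 0 < a → 0 < x a) (hk : ∀ a, 0 < a → 0 < k a)
    {p : ℝ} (hp : p ∈ Ioo (0:ℝ) 1)
    {c : ℝ} (hc : 0 < c) {α : ℝ} (hα0 : 0 ≤ α) (hα1 : α ≤ 1)
    (hX : ∀ u, α * qS h₁.isHermitian x u + (1 - α) * qS h₂.isHermitian x u
      ≤ c * qS h.isHermitian x u)
    (hK : ∀ u, α * qS h₁.isHermitian k u + (1 - α) * qS h₂.isHermitian k u
      ≤ qS h.isHermitian k u) (v : Fin n → ℂ) :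
    α * qS h₁.isHermitian (fun a => x a ^ (1 - p) * k a ^ p) v
      + (1 - α) * qS h₂.isHermitian (fun a => x a ^ (1 - p) * k a ^ p) v
      ≤ c ^ (1 - p) * qS h.isHermitian (fun a => x a ^ (1 - p) * k a ^ p) v := by
  obtain ⟨μ, hμ⟩ := qS_integral (n := n) hp
  obtain ⟨i1, j1⟩ := hμ A₁ h₁ x k hx hk v
  obtain ⟨i2, j2⟩ := hμ A₂ h₂ x k hx hk v
  obtain ⟨i3, j3⟩ := hμ A h (fun a => c * x a) k (fun a ha => mul_pos hc (hx a ha)) hk v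
  have e : qS h.isHermitian (fun a => (c * x a) ^ (1 - p) * k a ^ p) v
      = c ^ (1 - p) * qS h.isHermitian (fun a => x a ^ (1 - p) * k a ^ p) v := by
    rw [← qS_smul]
    refine qS_congr h (fun a ha => ?_) v
    rw [Real.mul_rpow hc.le (hx a ha).le, mul_assoc]
  rw [← e, ← j1, ← j2, ← j3, ← integral_const_mul, ← integral_const_mul,
    ← integral_add (i1.const_mul _) (i2.const_mul _)]
  refine setIntegral_mono_on ((i1.const_mul _).add (i2.const_mul _)) i3 measurableSet_Ioi
    fun t ht => ?_
  have ht' : 0 < t := ht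
  have := mul_le_mul_of_nonneg_left (key_t h₁ h₂ h hx hk ht' hc hα0 hα1 hX hK v)
    (Real.rpow_nonneg ht'.le (p - 1))
  linarith

/-- the power mean -/
noncomputable def pmean (lam p : ℝ) (x : ℝ) : ℝ := (lam * x ^ p + (1 - lam)) ^ (1 / p)

lemma base_pos {lam p : ℝ} (hl0 : 0 ≤ lam) (hl1 : lam ≤ 1) {x : ℝ} (hx : 0 < x) :
    0 < lam * x ^ p + (1 - lam) := by
  have h := Real.rpow_pos_of_pos hx p
  rcases hl0.eq_or_lt with h0 | h0
  · subst h0; simp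
  · have := mul_pos h0 h
    linarith

lemma pmean_pos {lam p : ℝ} (hl0 : 0 ≤ lam) (hl1 : lam ≤ 1) {x : ℝ} (hx : 0 < x) :
    0 < pmean lam p x := Real.rpow_pos_of_pos (base_pos hl0 hl1 hx) _

lemma pmean_fix {lam p : ℝ} (hp : 0 < p) (hl0 : 0 ≤ lam) (hl1 : lam ≤ 1) {x : ℝ} (hx : 0 < x) :
    pmean lam p x = lam * (pmean lam p x ^ (1 - p) * x ^ p)
      + (1 - lam) * (pmean lam p x ^ (1 - p) * 1 ^ p) := by
  have hb := base_pos (p := p) hl0 hl1 hx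
  have hm := pmean_pos (p := p) hl0 hl1 hx
  have h1 : pmean lam p x ^ p = lam * x ^ p + (1 - lam) := by
    rw [pmean, ← Real.rpow_mul hb.le, one_div, inv_mul_cancel₀ hp.ne', Real.rpow_one]
  rw [Real.one_rpow]
  calc pmean lam p x = pmean lam p x ^ (1 - p) * pmean lam p x ^ p := by
        rw [← Real.rpow_add hm]; simp
    _ = _ := by rw [h1]; ring

lemma step {A₁ A₂ A : Matrix (Fin n) (Fin n) ℂ} (h₁ : A₁.PosDef) (h₂ : A₂.PosDef) (h : A.PosDef)
    {p lam : ℝ} (hp : p ∈ Set.Ioo (0:ℝ) 1) (hl0 : 0 ≤ lam) (hl1 : lam ≤ 1)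
    {c : ℝ} (hc : 0 < c) {α : ℝ} (hα0 : 0 ≤ α) (hα1 : α ≤ 1)
    (hA : A = α • A₁ + (1 - α) • A₂)
    (hX : ∀ u, α * qS h₁.isHermitian (pmean lam p) u + (1 - α) * qS h₂.isHermitian (pmean lam p) u
      ≤ c * qS h.isHermitian (pmean lam p) u) (v : Fin n → ℂ) :
    α * qS h₁.isHermitian (pmean lam p) v + (1 - α) * qS h₂.isHermitian (pmean lam p) v
      ≤ c ^ (1 - p) * qS h.isHermitian (pmean lam p) v := by
  have hm : ∀ a, 0 < a → 0 < pmean lam p a := fun a ha => pmean_pos hl0 hl1 ha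
  have k1 := key_p h₁ h₂ h (k := fun x => x) hm (fun a ha => ha) hp hc hα0 hα1 hX (by
    intro u
    refine le_of_eq ?_
    have : ((α * qS h₁.isHermitian (fun x => x) u + (1 - α) * qS h₂.isHermitian (fun x => x) u : ℝ)
      : ℂ) = ((qS h.isHermitian (fun x => x) u : ℝ) : ℂ) := by
      push_cast
      rw [qS_id, qS_id, qS_id, hA, Matrix.add_mulVec, Matrix.smul_mulVec, Matrix.smul_mulVec,
        dotProduct_add, dotProduct_smul, dotProduct_smul, Complex.real_smul, Complex.real_smul]
      push_cast
      rfl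
    exact_mod_cast this) v
  have k2 := key_p h₁ h₂ h (k := fun _ => 1) hm (fun a ha => one_pos) hp hc hα0 hα1 hX (by
    intro u
    refine le_of_eq ?_
    have : ((α * qS h₁.isHermitian (fun _ => 1) u + (1 - α) * qS h₂.isHermitian (fun _ => 1) u : ℝ)
      : ℂ) = ((qS h.isHermitian (fun _ => 1) u : ℝ) : ℂ) := by
      push_cast
      rw [qS_one, qS_one, qS_one]
      ring
    exact_mod_cast this) v
  have key : ∀ (B : Matrix (Fin n) (Fin n) ℂ) (hB : B.PosDef), qS hB.isHermitian (pmean lam p) v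
      = lam * qS hB.isHermitian (fun a => pmean lam p a ^ (1 - p) * a ^ p) v
      + (1 - lam) * qS hB.isHermitian (fun a => pmean lam p a ^ (1 - p) * 1 ^ p) v := by
    intro B hB
    rw [← qS_linear]
    exact qS_congr hB (fun x hx => pmean_fix hp.1 hl0 hl1 hx) v
  rw [key _ h₁, key _ h₂, key _ h]
  have e1 := mul_le_mul_of_nonneg_left k1 hl0
  have e2 := mul_le_mul_of_nonneg_left k2 (sub_nonneg.2 hl1)
  linarith

lemma qS_le_sum {A : Matrix (Fin n) (Fin n) ℂ} (hA : A.PosDef) {x : ℝ → ℝ}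
    (hx : ∀ a, 0 < a → 0 < x a) : ∃ M : ℝ, 0 < M ∧
    ∀ v, qS hA.isHermitian x v ≤ M * qS hA.isHermitian (fun _ => 1) v := by
  have hp : ∀ j, 0 < x (hA.isHermitian.eigenvalues j) := fun j => hx _ (hA.eigenvalues_pos j)
  refine ⟨1 + ∑ j, x (hA.isHermitian.eigenvalues j), ?_, fun v => ?_⟩
  · have := Finset.sum_nonneg fun j (_ : j ∈ Finset.univ) => (hp j).le
    linarith
  · simp only [qS, Finset.mul_sum, one_mul]
    refine Finset.sum_le_sum fun j hj => ?_
    refine mul_le_mul_of_nonneg_right ?_ (wgt_nonneg _ _ _)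
    have := Finset.single_le_sum (fun j (_ : j ∈ Finset.univ) => (hp j).le) hj
    linarith

lemma sum_le_qS {A : Matrix (Fin n) (Fin n) ℂ} (hA : A.PosDef) {x : ℝ → ℝ}
    (hx : ∀ a, 0 < a → 0 < x a) : ∃ M : ℝ, 0 < M ∧
    ∀ v, qS hA.isHermitian (fun _ => 1) v ≤ M * qS hA.isHermitian x v := by
  have hp : ∀ j, 0 < x (hA.isHermitian.eigenvalues j) := fun j => hx _ (hA.eigenvalues_pos j)
  have hp' : ∀ j, 0 < (x (hA.isHermitian.eigenvalues j))⁻¹ := fun j => inv_pos.2 (hp j)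
  refine ⟨1 + ∑ j, (x (hA.isHermitian.eigenvalues j))⁻¹, ?_, fun v => ?_⟩
  · have := Finset.sum_nonneg fun j (_ : j ∈ Finset.univ) => (hp' j).le
    linarith
  · simp only [qS, Finset.mul_sum, one_mul, ← mul_assoc]
    refine Finset.sum_le_sum fun j hj => ?_
    refine le_mul_of_one_le_left (wgt_nonneg _ _ _) ?_
    have h1 := Finset.single_le_sum (fun j (_ : j ∈ Finset.univ) => (hp' j).le) hj
    have h2 := mul_inv_cancel₀ (hp j).ne'
    have h3 := mul_le_mul_of_nonneg_left h1 (hp j).le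
    have := hp j
    linarith

lemma main_lt {A₁ A₂ A : Matrix (Fin n) (Fin n) ℂ} (h₁ : A₁.PosDef) (h₂ : A₂.PosDef)
    (h : A.PosDef)
    {p lam : ℝ} (hp : p ∈ Set.Ioo (0:ℝ) 1) (hl0 : 0 ≤ lam) (hl1 : lam ≤ 1)
    {α : ℝ} (hα0 : 0 ≤ α) (hα1 : α ≤ 1)
    (hA : A = α • A₁ + (1 - α) • A₂) (v : Fin n → ℂ) :
    α * qS h₁.isHermitian (pmean lam p) v + (1 - α) * qS h₂.isHermitian (pmean lam p) v
      ≤ qS h.isHermitian (pmean lam p) v := by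
  have hm : ∀ a, 0 < a → 0 < pmean lam p a := fun a ha => pmean_pos hl0 hl1 ha
  obtain ⟨M₁, hM₁, b₁⟩ := qS_le_sum h₁ hm
  obtain ⟨M₂, hM₂, b₂⟩ := qS_le_sum h₂ hm
  obtain ⟨M, hM, b⟩ := sum_le_qS h hm
  have o1 : ∀ v, qS h₁.isHermitian (fun _ => 1) v = qS h.isHermitian (fun _ => 1) v := fun v => by
    have := (qS_one h₁.isHermitian v).trans (qS_one h.isHermitian v).symm
    exact_mod_cast this
  have o2 : ∀ v, qS h₂.isHermitian (fun _ => 1) v = qS h.isHermitian (fun _ => 1) v := fun v => by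
    have := (qS_one h₂.isHermitian v).trans (qS_one h.isHermitian v).symm
    exact_mod_cast this
  have hc : 0 < (M₁ + M₂) * M := by positivity
  set c := (M₁ + M₂) * M with hcdef
  have hiter : ∀ m : ℕ, ∀ v, α * qS h₁.isHermitian (pmean lam p) v
      + (1 - α) * qS h₂.isHermitian (pmean lam p) v
      ≤ c ^ ((1 - p) ^ m) * qS h.isHermitian (pmean lam p) v := by
    intro m
    induction m with
    | zero =>
      intro v
      rw [pow_zero, Real.rpow_one]
      have n1 : 0 ≤ qS h.isHermitian (fun _ => 1) v :=
        Finset.sum_nonneg fun j _ => mul_nonneg zero_le_one (wgt_nonneg _ _ _)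
      have c1 := mul_le_mul_of_nonneg_left (b₁ v) hα0
      have c2 := mul_le_mul_of_nonneg_left (b₂ v) (sub_nonneg.2 hα1)
      have c3 := mul_le_mul_of_nonneg_left (b v) (add_pos hM₁ hM₂).le
      rw [o1] at c1
      rw [o2] at c2
      have c4 : α * (M₁ * qS h.isHermitian (fun _ => 1) v) ≤ M₁ * qS h.isHermitian (fun _ => 1) v :=
        mul_le_of_le_one_left (by positivity) hα1
      have c5 : (1 - α) * (M₂ * qS h.isHermitian (fun _ => 1) v)
          ≤ M₂ * qS h.isHermitian (fun _ => 1) v :=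
        mul_le_of_le_one_left (by positivity) (by linarith)
      rw [hcdef]
      linarith
    | succ m ih =>
      intro v
      have := step h₁ h₂ h hp hl0 hl1 (Real.rpow_pos_of_pos hc _) hα0 hα1 hA ih v
      rwa [← Real.rpow_mul hc.le, ← pow_succ] at this
  have hlim : Filter.Tendsto (fun m : ℕ => c ^ ((1 - p) ^ m) * qS h.isHermitian (pmean lam p) v)
      Filter.atTop (nhds (c ^ (0:ℝ) * qS h.isHermitian (pmean lam p) v)) := by
    refine Filter.Tendsto.mul_const _ ?_
    refine Filter.Tendsto.rpow tendsto_const_nhds ?_ (Or.inl hc.ne')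
    exact tendsto_pow_atTop_nhds_zero_of_lt_one (by linarith [hp.2]) (by linarith [hp.1])
  rw [Real.rpow_zero, one_mul] at hlim
  exact ge_of_tendsto' hlim fun m => hiter m v

lemma main_one {A₁ A₂ A : Matrix (Fin n) (Fin n) ℂ} (h₁ : A₁.PosDef) (h₂ : A₂.PosDef)
    (h : A.PosDef) {lam : ℝ} {α : ℝ}
    (hA : A = α • A₁ + (1 - α) • A₂) (v : Fin n → ℂ) :
    α * qS h₁.isHermitian (pmean lam 1) v + (1 - α) * qS h₂.isHermitian (pmean lam 1) v
      = qS h.isHermitian (pmean lam 1) v := by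
  have key : ∀ (B : Matrix (Fin n) (Fin n) ℂ) (hB : B.PosDef), qS hB.isHermitian (pmean lam 1) v
      = lam * qS hB.isHermitian (fun a => a) v
      + (1 - lam) * qS hB.isHermitian (fun a => 1) v := by
    intro B hB
    rw [← qS_linear]
    exact qS_congr hB (fun x hx => by simp [pmean]) v
  have : ((α * qS h₁.isHermitian (pmean lam 1) v + (1 - α) * qS h₂.isHermitian (pmean lam 1) v : ℝ)
      : ℂ) = ((qS h.isHermitian (pmean lam 1) v : ℝ) : ℂ) := by
    rw [key _ h₁, key _ h₂, key _ h]
    push_cast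
    rw [qS_id, qS_id, qS_id, qS_one, qS_one, qS_one, hA, Matrix.add_mulVec, Matrix.smul_mulVec,
      Matrix.smul_mulVec, dotProduct_add, dotProduct_smul, dotProduct_smul, Complex.real_smul,
      Complex.real_smul]
    push_cast
    ring
  exact_mod_cast this

end helpers

theorem stmt14 {n : ℕ} (p lam : ℝ) (hp0 : 0 < p) (hp1 : p ≤ 1)
    (hl0 : 0 ≤ lam) (hl1 : lam ≤ 1)
    (A₁ A₂ : Matrix (Fin n) (Fin n) ℂ) (hA₁ : A₁.PosDef) (hA₂ : A₂.PosDef)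
    (α : ℝ) (hα0 : 0 ≤ α) (hα1 : α ≤ 1) :
    (mpow (lam • mpow (α • A₁ + (1 - α) • A₂) p + (1 - lam) • (1 : Matrix (Fin n) (Fin n) ℂ))
        (1 / p) -
      (α • mpow (lam • mpow A₁ p + (1 - lam) • 1) (1 / p) +
        (1 - α) • mpow (lam • mpow A₂ p + (1 - lam) • 1) (1 / p))).PosSemidef := by
  have hA : (α • A₁ + (1 - α) • A₂).PosDef := by
    rcases hα0.eq_or_lt with h0 | h0
    · subst h0; simpa using hA₂
    · exact (hA₁.smul h0).add_posSemidef (hA₂.posSemidef.smul (sub_nonneg.2 hα1))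
  have hmain : ∀ v, α * qS hA₁.isHermitian (pmean lam p) v
      + (1 - α) * qS hA₂.isHermitian (pmean lam p) v ≤ qS hA.isHermitian (pmean lam p) v := by
    intro v
    rcases hp1.eq_or_lt with h1 | h1
    · subst h1
      exact (main_one hA₁ hA₂ hA rfl v).le
    · exact main_lt hA₁ hA₂ hA ⟨hp0, h1⟩ hl0 hl1 hα0 hα1 rfl v
  rw [mpow_comp hA.isHermitian, mpow_comp hA₁.isHermitian, mpow_comp hA₂.isHermitian]
  change (cfc (pmean lam p) (α • A₁ + (1 - α) • A₂) -
    (α • cfc (pmean lam p) A₁ + (1 - α) • cfc (pmean lam p) A₂)).PosSemidef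
  have hs : ∀ B : Matrix (Fin n) (Fin n) ℂ, IsSelfAdjoint (cfc (pmean lam p) B) :=
    fun B => cfc_predicate _ B
  refine Matrix.PosSemidef.of_dotProduct_mulVec_nonneg ?_ fun v => ?_
  · exact (hs _).sub (((IsSelfAdjoint.all α).smul (hs _)).add
      ((IsSelfAdjoint.all (1 - α)).smul (hs _)))
  · rw [Matrix.sub_mulVec, Matrix.add_mulVec, Matrix.smul_mulVec, Matrix.smul_mulVec,
      dotProduct_sub, dotProduct_add, dotProduct_smul, dotProduct_smul, Complex.real_smul,
      Complex.real_smul, qS_eq hA.isHermitian, qS_eq hA₁.isHermitian, qS_eq hA₂.isHermitian]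
    have := sub_nonneg.2 (hmain v)
    exact_mod_cast this
end
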